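/- Fix real exponents p, r, γ with 1 < p < r and 0 < γ < 1, and constants S > 0, c₅ > 0, c₆ > 0. Then there exist c₇ > 0 and λ* > 0 such that: for every λ ∈ (0, λ*), every X > 0, and all reals A, B, C with A ≥ S·X^p, 0 < B ≤ c₅·X^{1−γ}, and 0 ≤ C ≤ c₆·X^r, one has sup_{t>0} [t^{p−r}·A − t^{1−r−γ}·B] − λ·C ≥ (c₇ − λ·c₆)·X^r > 0. (Abstract form of estimate (10) in the paper: the maximum of the reduced fiber function strictly exceeds λ‖u‖_r^r uniformly in u for all small λ.) -/

import Mathlib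

open Real

/-- Abstract form of estimate (10): the maximum of the reduced fiber function
strictly exceeds `λ‖u‖_r^r` uniformly for all small `λ > 0`. -/
theorem fiber_sup_exceeds (p r γ S c₅ c₆ : ℝ)
    (hp : 1 < p) (hpr : p < r) (hγ0 : 0 < γ) (hγ1 : γ < 1)
    (hS : 0 < S) (hc₅ : 0 < c₅) (hc₆ : 0 < c₆) :
    ∃ c₇ > 0, ∃ lamStar > 0, ∀ lam : ℝ, 0 < lam → lam < lamStar →
      ∀ X : ℝ, 0 < X → ∀ A B C : ℝ,
        S * X ^ p ≤ A → 0 < B → B ≤ c₅ * X ^ (1 - γ) →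
        0 ≤ C → C ≤ c₆ * X ^ r →
        sSup {y : ℝ | ∃ t : ℝ, 0 < t ∧ y = t ^ (p - r) * A - t ^ (1 - r - γ) * B}
            - lam * C ≥ (c₇ - lam * c₆) * X ^ r
          ∧ 0 < (c₇ - lam * c₆) * X ^ r := by
  have hq : 0 < p + γ - 1 := by linarith
  obtain ⟨k, hk, hkq⟩ : ∃ k : ℝ, 0 < k ∧ k ^ (p + γ - 1) = 2 * c₅ / S := by
    refine ⟨(2 * c₅ / S) ^ (p + γ - 1)⁻¹, by positivity, ?_⟩
    exact Real.rpow_inv_rpow (by positivity) hq.ne'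
  have hc7 : 0 < k ^ (1 - r - γ) * c₅ := by positivity
  refine ⟨k ^ (1 - r - γ) * c₅, hc7, k ^ (1 - r - γ) * c₅ / c₆, by positivity, ?_⟩
  intro lam hl0 hl X hX A B C hA hB hBX hC0 hC
  have hXr : 0 < X ^ r := by positivity
  have hl2 : lam * c₆ < k ^ (1 - r - γ) * c₅ := (lt_div_iff₀ hc₆).1 hl
  refine ⟨?_, mul_pos (by linarith) hXr⟩
  have hA0 : 0 < A := lt_of_lt_of_le (by positivity) hA
  have hsplit : ∀ t : ℝ, 0 < t → t ^ (p - r) = t ^ (1 - r - γ) * t ^ (p + γ - 1) := by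
    intro t ht
    rw [← Real.rpow_add ht]
    congr 1
    ring
  have hbdd : BddAbove
      {y : ℝ | ∃ t : ℝ, 0 < t ∧ y = t ^ (p - r) * A - t ^ (1 - r - γ) * B} := by
    obtain ⟨t0, ht0, htq⟩ : ∃ k : ℝ, 0 < k ∧ k ^ (p + γ - 1) = B / A := by
      refine ⟨(B / A) ^ (p + γ - 1)⁻¹, by positivity, ?_⟩
      exact Real.rpow_inv_rpow (by positivity) hq.ne'
    refine ⟨t0 ^ (p - r) * A, ?_⟩
    rintro y ⟨t, ht, rfl⟩
    have h3 : 0 < t ^ (1 - r - γ) := by positivity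
    rcases le_total t0 t with h | h
    · have h1 : t ^ (p - r) ≤ t0 ^ (p - r) :=
        Real.rpow_le_rpow_of_nonpos ht0 h (by linarith)
      have h2 := mul_le_mul_of_nonneg_right h1 hA0.le
      have h4 := mul_pos h3 hB
      linarith
    · have h1 : t ^ (p + γ - 1) ≤ B / A := by
        rw [← htq]
        exact Real.rpow_le_rpow ht.le h hq.le
      have h2 : t ^ (p + γ - 1) * A ≤ B := (le_div_iff₀ hA0).1 h1
      have h4 := mul_le_mul_of_nonneg_left h2 h3.le
      have h5 : 0 < t0 ^ (p - r) * A := by positivity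
      rw [hsplit t ht]
      linarith
  have hle := le_csSup hbdd ⟨k / X, by positivity, rfl⟩
  have e1 : (k / X) ^ (p - r) * (S * X ^ p) = 2 * (k ^ (1 - r - γ) * c₅) * X ^ r := by
    have hx : X ^ p = X ^ (p - r) * X ^ r := by
      rw [← Real.rpow_add hX]; congr 1; ring
    have h0 : X ^ (p - r) ≠ 0 := by positivity
    rw [Real.div_rpow hk.le hX.le, hsplit k hk, hkq, hx]
    field_simp
  have e2 : (k / X) ^ (1 - r - γ) * (c₅ * X ^ (1 - γ)) = k ^ (1 - r - γ) * c₅ * X ^ r := by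
    have hx : X ^ (1 - γ) = X ^ (1 - r - γ) * X ^ r := by
      rw [← Real.rpow_add hX]; congr 1; ring
    have h0 : X ^ (1 - r - γ) ≠ 0 := by positivity
    rw [Real.div_rpow hk.le hX.le, hx]
    field_simp
  have i1 : (k / X) ^ (p - r) * (S * X ^ p) ≤ (k / X) ^ (p - r) * A :=
    mul_le_mul_of_nonneg_left hA (by positivity)
  have i2 : (k / X) ^ (1 - r - γ) * B ≤ (k / X) ^ (1 - r - γ) * (c₅ * X ^ (1 - γ)) :=
    mul_le_mul_of_nonneg_left hBX (by positivity)
  have i3 : lam * C ≤ lam * (c₆ * X ^ r) := mul_le_mul_of_nonneg_left hC hl0.le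
  linarith
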